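/- Let a, b be real numbers and let u, v : ℝ × ℝ → ℝ be smooth (C^∞) on [0,∞) × [0,1], satisfying the coupled Burgers' equations ∂_t u = ∂_{xx} u − u ∂_x u − a ∂_x(uv) and ∂_t v = ∂_{xx} v − v ∂_x v − b ∂_x(uv) for all t ≥ 0 and x ∈ [0,1], with Dirichlet boundary conditions u(t,0) = u(t,1) = v(t,0) = v(t,1) = 0 for all t ≥ 0. Define J(t) := ½(∫₀¹ (∂_x u(t,x))² dx + ∫₀¹ (∂_x v(t,x))² dx). Then for every t ≥ 0, J'(t) ≤ -J(t) + 40 J(t)² + 36000 (|a|+|b|)⁴ J(t)³. -/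

import Mathlib

/-!
For a single component, integrating by parts and inserting the equation gives
`½ d/dt ‖uₓ‖² = -⟨uₓₓ, uₜ⟩ = -‖uₓₓ‖² + ⟨uₓₓ, u uₓ + a (u v)ₓ⟩`.
Young's inequality absorbs the nonlinear terms into a quarter of `‖uₓₓ‖²`, at the price of
`‖u uₓ‖²` and `‖(u v)ₓ‖²`; on an interval of length `L` the boundary conditions bound these through
`sup u² ≤ L ‖uₓ‖²`. The remaining three quarters of `‖uₓₓ‖²` dominate `‖uₓ‖² / L²`, because `uₓ`
vanishes somewhere by Rolle's theorem. Adding the two components leaves a cross term quadratic in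
`J`, which is interpolated between `J` and `J³`.
-/

open Set MeasureTheory Topology Function

section Interval

variable {a b : ℝ} {f w w' : ℝ → ℝ}

lemma intervalIntegral_sq_le (hab : a ≤ b) (hf : ContinuousOn f (Icc a b)) :
    (∫ x in a..b, f x) ^ 2 ≤ (b - a) * ∫ x in a..b, f x ^ 2 := by
  rcases hab.eq_or_lt with rfl | hab'
  · simp
  have hjensen : (⨍ x in a..b, f x) ^ 2 ≤ ⨍ x in a..b, f x ^ 2 := by
    rw [uIoc_of_le hab]
    exact even_two.convexOn_pow.map_set_average_le (continuous_pow 2).continuousOn isClosed_univ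
      (by simp [hab']) (by simp) (by simp) (hf.integrableOn_Icc.mono_set Ioc_subset_Icc_self)
      ((hf.pow 2).integrableOn_Icc.mono_set Ioc_subset_Icc_self)
  have hlen : 0 < b - a := sub_pos.2 hab'
  rw [interval_average_eq_div, interval_average_eq_div, div_pow, div_le_div_iff₀ (by positivity)
    hlen] at hjensen
  nlinarith

lemma sq_sub_le_length_mul_integral_sq_deriv (hw : ContinuousOn w (Icc a b))
    (hd : ∀ x ∈ Ioo a b, HasDerivAt w (w' x) x) (hw' : ContinuousOn w' (Icc a b))
    {x y : ℝ} (hx : x ∈ Icc a b) (hy : y ∈ Icc a b) :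
    (w x - w y) ^ 2 ≤ (b - a) * ∫ z in a..b, w' z ^ 2 := by
  wlog hyx : y ≤ x generalizing x y
  · rw [sub_sq_comm]
    exact this hy hx (le_of_not_ge hyx)
  have hsub : Icc y x ⊆ Icc a b := Icc_subset_Icc hy.1 hx.2
  have hftc : ∫ z in y..x, w' z = w x - w y :=
    intervalIntegral.integral_eq_sub_of_hasDerivAt_of_le hyx (hw.mono hsub)
      (fun z hz => hd z (Ioo_subset_Ioo hy.1 hx.2 hz))
      ((hw'.mono hsub).intervalIntegrable_of_Icc hyx)
  have hmono : ∫ z in y..x, w' z ^ 2 ≤ ∫ z in a..b, w' z ^ 2 :=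
    intervalIntegral.integral_mono_interval hy.1 hyx hx.2 (.of_forall fun z => sq_nonneg (w' z))
      ((hw'.pow 2).intervalIntegrable_of_Icc (hx.1.trans hx.2))
  calc (w x - w y) ^ 2 = (∫ z in y..x, w' z) ^ 2 := by rw [hftc]
    _ ≤ (x - y) * ∫ z in y..x, w' z ^ 2 := intervalIntegral_sq_le hyx (hw'.mono hsub)
    _ ≤ (b - a) * ∫ z in a..b, w' z ^ 2 :=
      mul_le_mul (sub_le_sub hx.2 hy.1) hmono
        (intervalIntegral.integral_nonneg hyx fun z _ => sq_nonneg (w' z))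
        (sub_nonneg.2 (hx.1.trans hx.2))

lemma integral_sq_deriv_le_of_eq_endpoints {w'' : ℝ → ℝ} (hab : a < b) (h_end : w a = w b)
    (hw : ContinuousOn w (Icc a b)) (hd : ∀ x ∈ Ioo a b, HasDerivAt w (w' x) x)
    (hw' : ContinuousOn w' (Icc a b)) (hd' : ∀ x ∈ Ioo a b, HasDerivAt w' (w'' x) x)
    (hw'' : ContinuousOn w'' (Icc a b)) :
    ∫ x in a..b, w' x ^ 2 ≤ (b - a) ^ 2 * ∫ x in a..b, w'' x ^ 2 := by
  obtain ⟨c, hc, hc0⟩ := exists_hasDerivAt_eq_zero hab hw h_end hd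
  calc ∫ x in a..b, w' x ^ 2
      ≤ ∫ _ in a..b, (b - a) * ∫ z in a..b, w'' z ^ 2 := by
        refine intervalIntegral.integral_mono_on hab.le
          ((hw'.pow 2).intervalIntegrable_of_Icc hab.le) intervalIntegrable_const fun x hx => ?_
        simpa only [hc0, sub_zero] using
          sq_sub_le_length_mul_integral_sq_deriv hw' hd' hw'' hx (Ioo_subset_Icc_self hc)
    _ = (b - a) ^ 2 * ∫ x in a..b, w'' x ^ 2 := by
        rw [intervalIntegral.integral_const, smul_eq_mul]
        ring

end Interval

section Leibniz

variable {E : Type*} [NormedAddCommGroup E] [NormedSpace ℝ E]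

lemma hasDerivWithinAt_intervalIntegral_of_continuousOn {I : Set ℝ} {a b t : ℝ}
    {f f' : ℝ → ℝ → E} (hI : Convex ℝ I) (ht : t ∈ I)
    (hf : ∀ s ∈ I, IntervalIntegrable (f s) volume a b)
    (hd : ∀ s ∈ I, ∀ x ∈ uIcc a b, HasDerivWithinAt (fun s => f s x) (f' s x) I s)
    (hf' : ContinuousOn (uncurry f') (I ×ˢ uIcc a b)) :
    HasDerivWithinAt (fun s => ∫ x in a..b, f s x) (∫ x in a..b, f' t x) I t := by
  have hf't : IntervalIntegrable (f' t) volume a b :=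
    (hf'.uncurry_left t ht).intervalIntegrable
  have hfst (s : ℝ) : IntervalIntegrable (fun x => (s - t) • f' t x) volume a b := hf't.smul (s - t)
  rw [hasDerivWithinAt_iff_isLittleO, Asymptotics.isLittleO_iff]
  intro ε hε
  set δ := ε / (|b - a| + 1)
  have hδ : 0 < δ := by positivity
  obtain ⟨V, hV, hVδ⟩ :=
    isCompact_uIcc.mem_uniformity_of_prod hf' ht (Metric.dist_mem_uniformity hδ)
  obtain ⟨ρ, hρ, hρV⟩ := Metric.mem_nhdsWithin_iff.1 hV
  filter_upwards [inter_mem_nhdsWithin I (Metric.ball_mem_nhds t hρ)] with s hs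
  have hremainder : ∀ x ∈ uIcc a b, ‖f s x - f t x - (s - t) • f' t x‖ ≤ δ * ‖s - t‖ := by
    intro x hx
    have hmvt := ((convex_ball t ρ).inter hI).norm_image_sub_le_of_norm_hasDerivWithin_le
      (f := fun r => f r x - r • f' t x) (f' := fun r => f' r x - (1 : ℝ) • f' t x) (C := δ)
      (fun r hr => ((hd r hr.2 x hx).mono inter_subset_right).sub
        ((hasDerivWithinAt_id r _).smul_const (f' t x)))
      (fun r hr => by
        rw [one_smul, ← dist_eq_norm]
        exact (hVδ r (hρV hr) x hx).le)
      ⟨Metric.mem_ball_self hρ, ht⟩ hs.symm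
    rwa [sub_sub_sub_comm, ← sub_smul] at hmvt
  calc ‖(∫ x in a..b, f s x) - (∫ x in a..b, f t x) - (s - t) • ∫ x in a..b, f' t x‖
      = ‖∫ x in a..b, (f s x - f t x - (s - t) • f' t x)‖ := by
        rw [← intervalIntegral.integral_smul, ← intervalIntegral.integral_sub (hf s hs.1) (hf t ht),
          ← intervalIntegral.integral_sub ((hf s hs.1).sub (hf t ht)) (hfst s)]
    _ ≤ δ * ‖s - t‖ * |b - a| :=
        intervalIntegral.norm_integral_le_of_norm_le_const fun x hx =>
          hremainder x (uIoc_subset_uIcc hx)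
    _ = δ * |b - a| * ‖s - t‖ := by ring
    _ ≤ ε * ‖s - t‖ := by
        gcongr
        rw [div_mul_eq_mul_div, div_le_iff₀ (by positivity)]
        nlinarith

end Leibniz

section DirectionalDerivative

variable {E F : Type*} [NormedAddCommGroup E] [NormedSpace ℝ E] [NormedAddCommGroup F]
  [NormedSpace ℝ F] {S : Set E} {f : E → F}

/-- The derivative of `f` within `S` in the direction `v`. Being taken within `S`, it is the correct
one-sided derivative on the boundary of `S`, where `deriv` of a slice of `f` may be a junk value. -/
noncomputable def dirDerivWithin (S : Set E) (v : E) (f : E → F) (p : E) : F :=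
  fderivWithin ℝ f S p v

lemma contDiffOn_dirDerivWithin {m n : WithTop ℕ∞} (hf : ContDiffOn ℝ n f S)
    (hS : UniqueDiffOn ℝ S) (hmn : m + 1 ≤ n) (v : E) : ContDiffOn ℝ m (dirDerivWithin S v f) S :=
  (hf.fderivWithin hS hmn).clm_apply contDiffOn_const

lemma continuousOn_dirDerivWithin (hf : ContDiffOn ℝ 1 f S) (hS : UniqueDiffOn ℝ S) (v : E) :
    ContinuousOn (dirDerivWithin S v f) S :=
  (contDiffOn_dirDerivWithin (m := 0) hf hS (by norm_num) v).continuousOn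

lemma dirDerivWithin_comm (hf : ContDiffOn ℝ 2 f S) (hS : UniqueDiffOn ℝ S) {p : E} (hp : p ∈ S)
    (hp_int : p ∈ closure (interior S)) (v w : E) :
    dirDerivWithin S v (dirDerivWithin S w f) p = dirDerivWithin S w (dirDerivWithin S v f) p := by
  have hdiff : DifferentiableWithinAt ℝ (fderivWithin ℝ f S) S p :=
    (hf.fderivWithin hS (by norm_num)).differentiableOn_one p hp
  have hsecond (v w : E) : dirDerivWithin S v (dirDerivWithin S w f) p
      = fderivWithin ℝ (fderivWithin ℝ f S) S p v w := by
    change fderivWithin ℝ (fun q => fderivWithin ℝ f S q w) S p v = _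
    simp [fderivWithin_clm_apply (hS p hp) hdiff (differentiableWithinAt_const w)]
  rw [hsecond, hsecond]
  exact (hf p hp).isSymmSndFDerivWithinAt (by simp) hS hp_int hp v w

variable {g : ℝ × ℝ → F} {I K : Set ℝ} {t x : ℝ}

lemma hasDerivWithinAt_fst_slice (hg : DifferentiableOn ℝ g (I ×ˢ K)) (ht : t ∈ I) (hx : x ∈ K) :
    HasDerivWithinAt (fun s => g (s, x)) (dirDerivWithin (I ×ˢ K) (1, 0) g (t, x)) I t :=
  (hg (t, x) ⟨ht, hx⟩).hasFDerivWithinAt.comp_hasDerivWithinAt t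
    ((hasDerivWithinAt_id t I).prodMk (hasDerivWithinAt_const t I x))
    fun _ hs => (⟨hs, hx⟩ : _ ∈ I ×ˢ K)

lemma hasDerivWithinAt_snd_slice (hg : DifferentiableOn ℝ g (I ×ˢ K)) (ht : t ∈ I) (hx : x ∈ K) :
    HasDerivWithinAt (fun y => g (t, y)) (dirDerivWithin (I ×ˢ K) (0, 1) g (t, x)) K x :=
  (hg (t, x) ⟨ht, hx⟩).hasFDerivWithinAt.comp_hasDerivWithinAt x
    ((hasDerivWithinAt_const x K t).prodMk (hasDerivWithinAt_id x K))
    fun _ hy => (⟨ht, hy⟩ : _ ∈ I ×ˢ K)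

end DirectionalDerivative

section Strip

variable {I : Set ℝ} {l r : ℝ} {f : ℝ × ℝ → ℝ}

/-- The space-time strip on which solutions are considered: times in `I`, positions in `[l, r]`. -/
abbrev strip (I : Set ℝ) (l r : ℝ) : Set (ℝ × ℝ) := I ×ˢ Icc l r

local notation "∂ₜ" => dirDerivWithin (strip I l r) ((1, 0) : ℝ × ℝ)
local notation "∂ₓ" => dirDerivWithin (strip I l r) ((0, 1) : ℝ × ℝ)

/-- The squared `L²` norm of `∂ₓf(t)` over `[l, r]`, with `f` written as a function of `(t, x)`. The
two-sided derivative may be junk at `l` and `r`, which does not affect the integral. -/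
noncomputable def dirichletIntegral (l r : ℝ) (f : ℝ × ℝ → ℝ) (t : ℝ) : ℝ :=
  ∫ x in l..r, deriv (fun y => f (t, y)) x ^ 2

lemma dirichletIntegral_nonneg (hlr : l ≤ r) (f : ℝ × ℝ → ℝ) (t : ℝ) :
    0 ≤ dirichletIntegral l r f t :=
  intervalIntegral.integral_nonneg hlr fun _ _ => sq_nonneg _

lemma strip_subset_closure_interior (hI : Convex ℝ I) (hI_int : (interior I).Nonempty)
    (hlr : l < r) : strip I l r ⊆ closure (interior I ×ˢ Ioo l r) := by
  rw [closure_prod_eq, hI.closure_interior_eq_closure_of_nonempty_interior hI_int,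
    closure_Ioo hlr.ne]
  exact prod_mono_left subset_closure

lemma uniqueDiffOn_strip (hI : Convex ℝ I) (hI_int : (interior I).Nonempty) (hlr : l < r) :
    UniqueDiffOn ℝ (strip I l r) :=
  (uniqueDiffOn_convex hI hI_int).prod (uniqueDiffOn_Icc hlr)

lemma hasDerivAt_space (hf : DifferentiableOn ℝ f (strip I l r)) {t x : ℝ} (ht : t ∈ I)
    (hx : x ∈ Ioo l r) : HasDerivAt (fun y => f (t, y)) (∂ₓ f (t, x)) x :=
  (hasDerivWithinAt_snd_slice hf ht (Ioo_subset_Icc_self hx)).hasDerivAt (Icc_mem_nhds hx.1 hx.2)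

lemma dirichletIntegral_eq (hf : DifferentiableOn ℝ f (strip I l r)) (hlr : l ≤ r) {t : ℝ}
    (ht : t ∈ I) : dirichletIntegral l r f t = ∫ x in l..r, ∂ₓ f (t, x) ^ 2 :=
  intervalIntegral.integral_congr_Ioo_of_le hlr fun x hx => by
    simp only [(hasDerivAt_space hf ht hx).deriv]

lemma deriv_deriv_space_eq (hf : DifferentiableOn ℝ f (strip I l r))
    (hf' : DifferentiableOn ℝ (∂ₓ f) (strip I l r)) {t x : ℝ} (ht : t ∈ I) (hx : x ∈ Ioo l r) :
    deriv (deriv fun y => f (t, y)) x = ∂ₓ (∂ₓ f) (t, x) := by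
  have heq : deriv (fun y => f (t, y)) =ᶠ[𝓝 x] fun y => ∂ₓ f (t, y) := by
    filter_upwards [isOpen_Ioo.mem_nhds hx] with y hy
    exact (hasDerivAt_space hf ht hy).deriv
  rw [heq.deriv_eq, (hasDerivAt_space hf' ht hx).deriv]

lemma deriv_time_eq_zero_of_eq_zero (hf : DifferentiableOn ℝ f (strip I l r))
    (hI : UniqueDiffOn ℝ I) {x : ℝ} (hx : x ∈ Icc l r) (hzero : ∀ t ∈ I, f (t, x) = 0) {t : ℝ}
    (ht : t ∈ I) : ∂ₜ f (t, x) = 0 :=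
  (hI t ht).eq_deriv _ (hasDerivWithinAt_fst_slice hf ht hx)
    ((hasDerivWithinAt_const t I 0).congr hzero (hzero t ht))

lemma continuousOn_space (hf : ContinuousOn f (strip I l r)) {t : ℝ} (ht : t ∈ I) :
    ContinuousOn (fun x => f (t, x)) (Icc l r) :=
  hf.uncurry_left (f := curry f) t ht

lemma integral_deriv_space_mul_deriv_time_deriv_space (hI : Convex ℝ I)
    (hI_int : (interior I).Nonempty) (hlr : l < r) (hf : ContDiffOn ℝ 2 f (strip I l r))
    (hf_bc : ∀ t ∈ I, f (t, l) = 0 ∧ f (t, r) = 0) {t : ℝ} (ht : t ∈ I) :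
    ∫ x in l..r, ∂ₓ f (t, x) * ∂ₜ (∂ₓ f) (t, x) = -∫ x in l..r, ∂ₓ (∂ₓ f) (t, x) * ∂ₜ f (t, x) := by
  have hS := uniqueDiffOn_strip hI hI_int hlr
  have hf' := hf.differentiableOn two_ne_zero
  have hfx : ContDiffOn ℝ 1 (∂ₓ f) _ := contDiffOn_dirDerivWithin hf hS (by norm_num) _
  have hft : ContDiffOn ℝ 1 (∂ₜ f) _ := contDiffOn_dirDerivWithin hf hS (by norm_num) _
  have hIcc : uIcc l r = Icc l r := uIcc_of_le hlr.le
  have hcomm : ∀ x ∈ uIcc l r, ∂ₜ (∂ₓ f) (t, x) = ∂ₓ (∂ₜ f) (t, x) := fun x hx => by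
    have hp : (t, x) ∈ strip I l r := ⟨ht, hIcc ▸ hx⟩
    refine dirDerivWithin_comm hf hS hp ?_ _ _
    rw [interior_prod_eq, interior_Icc]
    exact strip_subset_closure_interior hI hI_int hlr hp
  have hdx {g : ℝ × ℝ → ℝ} (hg : ContDiffOn ℝ 1 g (strip I l r)) : ∀ x ∈ uIcc l r,
      HasDerivWithinAt (fun y => g (t, y)) (∂ₓ g (t, x)) (uIcc l r) x := by
    rw [hIcc]
    exact fun x hx => hasDerivWithinAt_snd_slice hg.differentiableOn_one ht hx
  have hl : ∂ₜ f (t, l) = 0 := deriv_time_eq_zero_of_eq_zero hf' (uniqueDiffOn_convex hI hI_int)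
    (left_mem_Icc.2 hlr.le) (fun s hs => (hf_bc s hs).1) ht
  have hr : ∂ₜ f (t, r) = 0 := deriv_time_eq_zero_of_eq_zero hf' (uniqueDiffOn_convex hI hI_int)
    (right_mem_Icc.2 hlr.le) (fun s hs => (hf_bc s hs).2) ht
  calc ∫ x in l..r, ∂ₓ f (t, x) * ∂ₜ (∂ₓ f) (t, x)
      = ∫ x in l..r, ∂ₓ f (t, x) * ∂ₓ (∂ₜ f) (t, x) :=
        intervalIntegral.integral_congr fun x hx => by simp only [hcomm x hx]
    _ = ∂ₓ f (t, r) * ∂ₜ f (t, r) - ∂ₓ f (t, l) * ∂ₜ f (t, l)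
        - ∫ x in l..r, ∂ₓ (∂ₓ f) (t, x) * ∂ₜ f (t, x) :=
        intervalIntegral.integral_mul_deriv_eq_deriv_mul_of_hasDerivWithinAt
          (hdx hfx) (hdx hft)
          ((continuousOn_space (continuousOn_dirDerivWithin hfx hS _) ht).intervalIntegrable_of_Icc
            hlr.le)
          ((continuousOn_space (continuousOn_dirDerivWithin hft hS _) ht).intervalIntegrable_of_Icc
            hlr.le)
    _ = -∫ x in l..r, ∂ₓ (∂ₓ f) (t, x) * ∂ₜ f (t, x) := by simp [hl, hr]

lemma hasDerivWithinAt_dirichletIntegral (hI : Convex ℝ I) (hI_int : (interior I).Nonempty)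
    (hlr : l < r) (hf : ContDiffOn ℝ 2 f (strip I l r))
    (hf_bc : ∀ t ∈ I, f (t, l) = 0 ∧ f (t, r) = 0) {t : ℝ} (ht : t ∈ I) :
    HasDerivWithinAt (dirichletIntegral l r f)
      (-2 * ∫ x in l..r, ∂ₓ (∂ₓ f) (t, x) * ∂ₜ f (t, x)) I t := by
  have hS := uniqueDiffOn_strip hI hI_int hlr
  have hf' := hf.differentiableOn two_ne_zero
  have hfx : ContDiffOn ℝ 1 (∂ₓ f) _ := contDiffOn_dirDerivWithin hf hS (by norm_num) _
  have hIcc : uIcc l r = Icc l r := uIcc_of_le hlr.le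
  have hleibniz : HasDerivWithinAt (fun s => ∫ x in l..r, ∂ₓ f (s, x) ^ 2)
      (∫ x in l..r, 2 * (∂ₓ f (t, x) * ∂ₜ (∂ₓ f) (t, x))) I t := by
    refine hasDerivWithinAt_intervalIntegral_of_continuousOn
      (f' := fun s x => 2 * (∂ₓ f (s, x) * ∂ₜ (∂ₓ f) (s, x))) hI ht (fun s hs => ?_)
      (fun s hs x hx => ?_) ?_
    · exact ((continuousOn_space hfx.continuousOn hs).pow 2).intervalIntegrable_of_Icc hlr.le
    · have hfxt := hasDerivWithinAt_fst_slice hfx.differentiableOn_one hs (hIcc ▸ hx)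
      exact (hfxt.pow 2).congr_deriv (by ring)
    · rw [hIcc]
      exact (hfx.continuousOn.mul (continuousOn_dirDerivWithin hfx hS _)).const_mul 2
  rw [intervalIntegral.integral_const_mul,
    integral_deriv_space_mul_deriv_time_deriv_space hI hI_int hlr hf hf_bc ht,
    ← neg_mul_comm] at hleibniz
  exact hleibniz.congr (fun s hs => dirichletIntegral_eq hf' hlr.le hs)
    (dirichletIntegral_eq hf' hlr.le ht)

lemma dirichletIntegral_le_of_eq_endpoints (hI : Convex ℝ I) (hI_int : (interior I).Nonempty)
    (hlr : l < r) (hf : ContDiffOn ℝ 2 f (strip I l r)) {t : ℝ} (ht : t ∈ I)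
    (h_end : f (t, l) = f (t, r)) :
    dirichletIntegral l r f t ≤ (r - l) ^ 2 * ∫ x in l..r, ∂ₓ (∂ₓ f) (t, x) ^ 2 := by
  have hS := uniqueDiffOn_strip hI hI_int hlr
  have hf' := hf.differentiableOn two_ne_zero
  have hfx : ContDiffOn ℝ 1 (∂ₓ f) _ := contDiffOn_dirDerivWithin hf hS (by norm_num) _
  rw [dirichletIntegral_eq hf' hlr.le ht]
  exact integral_sq_deriv_le_of_eq_endpoints hlr h_end (continuousOn_space hf.continuousOn ht)
    (fun x hx => hasDerivAt_space hf' ht hx) (continuousOn_space hfx.continuousOn ht)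
    (fun x hx => hasDerivAt_space hfx.differentiableOn_one ht hx)
    (continuousOn_space (continuousOn_dirDerivWithin hfx hS _) ht)

lemma sq_le_length_mul_dirichletIntegral (hI : Convex ℝ I) (hI_int : (interior I).Nonempty)
    (hlr : l < r) (hf : ContDiffOn ℝ 1 f (strip I l r)) {t x : ℝ} (ht : t ∈ I)
    (hl : f (t, l) = 0) (hx : x ∈ Icc l r) :
    f (t, x) ^ 2 ≤ (r - l) * dirichletIntegral l r f t := by
  have hS := uniqueDiffOn_strip hI hI_int hlr
  rw [dirichletIntegral_eq hf.differentiableOn_one hlr.le ht]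
  simpa only [hl, sub_zero] using
    sq_sub_le_length_mul_integral_sq_deriv (continuousOn_space hf.continuousOn ht)
      (fun y hy => hasDerivAt_space hf.differentiableOn_one ht hy)
      (continuousOn_space (continuousOn_dirDerivWithin hf hS _) ht) hx (left_mem_Icc.2 hlr.le)

end Strip

section Burgers

variable {I : Set ℝ} {l r a : ℝ} {u v : ℝ × ℝ → ℝ}

local notation "∂ₜ" => dirDerivWithin (strip I l r) ((1, 0) : ℝ × ℝ)
local notation "∂ₓ" => dirDerivWithin (strip I l r) ((0, 1) : ℝ × ℝ)

/-- `u` satisfies the Burgers equation coupled to `v` with strength `a`; a coupled system imposes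
this on `u, v` and on `v, u`. It is required only in the interior, where the two-sided `deriv`s are
the partial derivatives; by continuity of the latter it extends to the boundary. -/
def SatisfiesCoupledBurgersEq (I : Set ℝ) (l r a : ℝ) (u v : ℝ × ℝ → ℝ) : Prop :=
  ∀ t ∈ interior I, ∀ x ∈ Ioo l r,
    deriv (fun s => u (s, x)) t =
      deriv (deriv (fun y => u (t, y))) x - u (t, x) * deriv (fun y => u (t, y)) x
        - a * deriv (fun y => u (t, y) * v (t, y)) x

lemma burgers_eqOn_strip (hI : Convex ℝ I) (hI_int : (interior I).Nonempty) (hlr : l < r)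
    (hu : ContDiffOn ℝ 2 u (strip I l r)) (hv : ContDiffOn ℝ 1 v (strip I l r))
    (heq : SatisfiesCoupledBurgersEq I l r a u v) :
    EqOn (∂ₜ u) (fun p => ∂ₓ (∂ₓ u) p - u p * ∂ₓ u p - a * (∂ₓ u p * v p + u p * ∂ₓ v p))
      (strip I l r) := by
  have hS := uniqueDiffOn_strip hI hI_int hlr
  have hu' := hu.differentiableOn two_ne_zero
  have hux : ContDiffOn ℝ 1 (∂ₓ u) _ := contDiffOn_dirDerivWithin hu hS (by norm_num) _
  have hut : ContDiffOn ℝ 1 (∂ₜ u) _ := contDiffOn_dirDerivWithin hu hS (by norm_num) _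
  have huc := hu.continuousOn
  have hvc := hv.continuousOn
  have huxc := hux.continuousOn
  have hvxc := continuousOn_dirDerivWithin hv hS ((0, 1) : ℝ × ℝ)
  have huxxc := continuousOn_dirDerivWithin hux hS ((0, 1) : ℝ × ℝ)
  refine EqOn.of_subset_closure (s := interior I ×ˢ Ioo l r) ?_ hut.continuousOn (by fun_prop)
    (prod_mono interior_subset Ioo_subset_Icc_self) (strip_subset_closure_interior hI hI_int hlr)
  rintro ⟨t, x⟩ ⟨ht, hx⟩
  have ht' := interior_subset ht
  have hdt := (hasDerivWithinAt_fst_slice hu' ht' (Ioo_subset_Icc_self hx)).hasDerivAt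
    (mem_interior_iff_mem_nhds.1 ht)
  have hdx := hasDerivAt_space hu' ht' hx
  have hdxv := hdx.mul (hasDerivAt_space hv.differentiableOn_one ht' hx)
  rw [← hdt.deriv, heq t ht x hx, deriv_deriv_space_eq hu' hux.differentiableOn_one ht' hx,
    hdx.deriv, show deriv (fun y => u (t, y) * v (t, y)) x = _ from hdxv.deriv]

lemma neg_mul_burgers_le {a A B u ux uxx v vx : ℝ} (hu : u ^ 2 ≤ A) (hv : v ^ 2 ≤ B) :
    -(uxx * (uxx - u * ux - a * (ux * v + u * vx)))
      ≤ -(3 / 4) * uxx ^ 2 + (2 * A + 4 * a ^ 2 * B) * ux ^ 2 + 4 * a ^ 2 * A * vx ^ 2 := by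
  have hyoung (z : ℝ) : uxx * z ≤ uxx ^ 2 / 8 + 2 * z ^ 2 := by linarith [sq_nonneg (uxx - 4 * z)]
  calc -(uxx * (uxx - u * ux - a * (ux * v + u * vx)))
      = -uxx ^ 2 + uxx * (u * ux) + uxx * (a * (ux * v + u * vx)) := by ring
    _ ≤ -(3 / 4) * uxx ^ 2 + 2 * (u * ux) ^ 2 + 2 * a ^ 2 * (ux * v + u * vx) ^ 2 := by
        linarith [hyoung (u * ux), hyoung (a * (ux * v + u * vx))]
    _ ≤ -(3 / 4) * uxx ^ 2 + 2 * (u * ux) ^ 2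
          + 2 * a ^ 2 * (2 * ((ux * v) ^ 2 + (u * vx) ^ 2)) := by
        gcongr
        exact add_sq_le
    _ = -(3 / 4) * uxx ^ 2 + (2 * u ^ 2 + 4 * a ^ 2 * v ^ 2) * ux ^ 2
          + 4 * a ^ 2 * u ^ 2 * vx ^ 2 := by ring
    _ ≤ _ := by gcongr

lemma neg_integral_mul_burgers_le {A B : ℝ} {u ux uxx v vx : ℝ → ℝ} (hlr : l ≤ r)
    (hu : ContinuousOn u (Icc l r)) (hux : ContinuousOn ux (Icc l r))
    (huxx : ContinuousOn uxx (Icc l r)) (hv : ContinuousOn v (Icc l r))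
    (hvx : ContinuousOn vx (Icc l r)) (hA : ∀ x ∈ Icc l r, u x ^ 2 ≤ A)
    (hB : ∀ x ∈ Icc l r, v x ^ 2 ≤ B) :
    -∫ x in l..r, uxx x * (uxx x - u x * ux x - a * (ux x * v x + u x * vx x))
      ≤ -(3 / 4) * (∫ x in l..r, uxx x ^ 2) + (2 * A + 4 * a ^ 2 * B) * (∫ x in l..r, ux x ^ 2)
        + 4 * a ^ 2 * A * ∫ x in l..r, vx x ^ 2 := by
  have hinteg {f : ℝ → ℝ} (hf : ContinuousOn f (Icc l r)) : IntervalIntegrable f volume l r :=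
    hf.intervalIntegrable_of_Icc hlr
  calc -∫ x in l..r, uxx x * (uxx x - u x * ux x - a * (ux x * v x + u x * vx x))
      = ∫ x in l..r, -(uxx x * (uxx x - u x * ux x - a * (ux x * v x + u x * vx x))) :=
        intervalIntegral.integral_neg.symm
    _ ≤ ∫ x in l..r, (-(3 / 4) * uxx x ^ 2 + (2 * A + 4 * a ^ 2 * B) * ux x ^ 2
          + 4 * a ^ 2 * A * vx x ^ 2) :=
        intervalIntegral.integral_mono_on hlr (hinteg (by fun_prop)) (hinteg (by fun_prop))
          fun x hx => neg_mul_burgers_le (hA x hx) (hB x hx)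
    _ = _ := by
        rw [intervalIntegral.integral_add (hinteg (by fun_prop)) (hinteg (by fun_prop)),
          intervalIntegral.integral_add (hinteg (by fun_prop)) (hinteg (by fun_prop))]
        simp only [intervalIntegral.integral_const_mul]

lemma exists_hasDerivWithinAt_dirichletIntegral_le (hI : Convex ℝ I)
    (hI_int : (interior I).Nonempty) (hlr : l < r) (hu : ContDiffOn ℝ 2 u (strip I l r))
    (hv : ContDiffOn ℝ 1 v (strip I l r))
    (heq : SatisfiesCoupledBurgersEq I l r a u v)
    (hu_bc : ∀ t ∈ I, u (t, l) = 0 ∧ u (t, r) = 0) (hv_bc : ∀ t ∈ I, v (t, l) = 0)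
    {t : ℝ} (ht : t ∈ I) :
    ∃ D, HasDerivWithinAt (dirichletIntegral l r u) D I t ∧
      D ≤ -(3 / 2) * (dirichletIntegral l r u t / (r - l) ^ 2)
        + 4 * (r - l) * dirichletIntegral l r u t ^ 2
        + 16 * a ^ 2 * (r - l) * (dirichletIntegral l r u t * dirichletIntegral l r v t) := by
  refine ⟨_, hasDerivWithinAt_dirichletIntegral hI hI_int hlr hu hu_bc ht, ?_⟩
  have hS := uniqueDiffOn_strip hI hI_int hlr
  have hux : ContDiffOn ℝ 1 (∂ₓ u) _ := contDiffOn_dirDerivWithin hu hS (by norm_num) _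
  have hpde : ∫ x in l..r, ∂ₓ (∂ₓ u) (t, x) * ∂ₜ u (t, x) = ∫ x in l..r, ∂ₓ (∂ₓ u) (t, x) *
      (∂ₓ (∂ₓ u) (t, x) - u (t, x) * ∂ₓ u (t, x)
        - a * (∂ₓ u (t, x) * v (t, x) + u (t, x) * ∂ₓ v (t, x))) :=
    intervalIntegral.integral_congr_Ioo_of_le hlr.le fun x hx => by
      simp only [burgers_eqOn_strip hI hI_int hlr hu hv heq
        (⟨ht, Ioo_subset_Icc_self hx⟩ : (t, x) ∈ strip I l r)]
  have hrate := neg_integral_mul_burgers_le (a := a) hlr.le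
    (continuousOn_space hu.continuousOn ht) (continuousOn_space hux.continuousOn ht)
    (continuousOn_space (continuousOn_dirDerivWithin hux hS (0, 1)) ht)
    (continuousOn_space hv.continuousOn ht)
    (continuousOn_space (continuousOn_dirDerivWithin hv hS (0, 1)) ht)
    (fun x hx => sq_le_length_mul_dirichletIntegral hI hI_int hlr (hu.of_le one_le_two) ht
      (hu_bc t ht).1 hx)
    (fun x hx => sq_le_length_mul_dirichletIntegral hI hI_int hlr hv ht (hv_bc t ht) hx)
  have hpoincare : dirichletIntegral l r u t / (r - l) ^ 2 ≤ ∫ x in l..r, ∂ₓ (∂ₓ u) (t, x) ^ 2 :=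
    (div_le_iff₀' (by have := sub_pos.2 hlr; positivity)).2 <|
      dirichletIntegral_le_of_eq_endpoints hI hI_int hlr hu ht
        ((hu_bc t ht).1.trans (hu_bc t ht).2.symm)
  rw [← hpde, ← dirichletIntegral_eq (hu.differentiableOn two_ne_zero) hlr.le ht,
    ← dirichletIntegral_eq hv.differentiableOn_one hlr.le ht] at hrate
  linarith

lemma energy_rate_le {L A B J : ℝ} (a b : ℝ) (hL : 0 < L) (hA : 0 ≤ A) (hB : 0 ≤ B)
    (hJ : J = 1 / 2 * (A + B)) :
    1 / 2 * ((-(3 / 2) * (A / L ^ 2) + 4 * L * A ^ 2 + 16 * a ^ 2 * L * (A * B))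
        + (-(3 / 2) * (B / L ^ 2) + 4 * L * B ^ 2 + 16 * b ^ 2 * L * (B * A)))
      ≤ -(J / L ^ 2) + 8 * L * J ^ 2 + 32 * (|a| + |b|) ^ 4 * L ^ 4 * J ^ 3 := by
  have hJ0 : 0 ≤ J := by rw [hJ]; positivity
  have hcoupling : a ^ 2 + b ^ 2 ≤ (|a| + |b|) ^ 2 := by
    rw [← sq_abs a, ← sq_abs b]
    linarith [mul_nonneg (abs_nonneg a) (abs_nonneg b)]
  set c := |a| + |b|
  have hsquares : A ^ 2 + B ^ 2 ≤ 4 * J ^ 2 := by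
    rw [hJ]
    linarith [mul_nonneg hA hB]
  have hproduct : A * B ≤ J ^ 2 := by
    rw [hJ]
    linarith [sq_nonneg (A - B)]
  have hinterp : 8 * c ^ 2 * L * J ^ 2 ≤ J / (2 * L ^ 2) + 32 * c ^ 4 * L ^ 4 * J ^ 3 := by
    have hsq : J / (2 * L ^ 2) + 32 * c ^ 4 * L ^ 4 * J ^ 3 - 8 * c ^ 2 * L * J ^ 2
        = J / (2 * L ^ 2) * (1 - 8 * c ^ 2 * L ^ 3 * J) ^ 2 := by
      field_simp
      ring
    have : 0 ≤ J / (2 * L ^ 2) * (1 - 8 * c ^ 2 * L ^ 3 * J) ^ 2 := by positivity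
    linarith
  calc _ = -(3 / 2) * (J / L ^ 2) + 2 * L * (A ^ 2 + B ^ 2)
          + 8 * (a ^ 2 + b ^ 2) * L * (A * B) := by
        rw [hJ]
        ring
    _ ≤ -(3 / 2) * (J / L ^ 2) + 2 * L * (4 * J ^ 2) + 8 * c ^ 2 * L * J ^ 2 := by gcongr
    _ ≤ -(3 / 2) * (J / L ^ 2) + 2 * L * (4 * J ^ 2)
          + (J / (2 * L ^ 2) + 32 * c ^ 4 * L ^ 4 * J ^ 3) := by gcongr
    _ = -(J / L ^ 2) + 8 * L * J ^ 2 + 32 * c ^ 4 * L ^ 4 * J ^ 3 := by ring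

theorem coupled_burgers_energy_inequality_general {b : ℝ} {J : ℝ → ℝ} (hI : Convex ℝ I)
    (hI_int : (interior I).Nonempty) (hlr : l < r)
    (hu : ContDiffOn ℝ 2 u (strip I l r)) (hv : ContDiffOn ℝ 2 v (strip I l r))
    (hequ : SatisfiesCoupledBurgersEq I l r a u v) (heqv : SatisfiesCoupledBurgersEq I l r b v u)
    (hbc : ∀ t ∈ I, u (t, l) = 0 ∧ u (t, r) = 0 ∧ v (t, l) = 0 ∧ v (t, r) = 0)
    (hJ : ∀ t ∈ I, J t = 1 / 2 * ((∫ x in l..r, deriv (fun y => u (t, y)) x ^ 2)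
      + ∫ x in l..r, deriv (fun y => v (t, y)) x ^ 2)) :
    ∃ J' : ℝ → ℝ, (∀ t ∈ I, HasDerivWithinAt J (J' t) I t) ∧
      ∀ t ∈ I, J' t ≤ -(J t / (r - l) ^ 2) + 8 * (r - l) * J t ^ 2
        + 32 * (|a| + |b|) ^ 4 * (r - l) ^ 4 * J t ^ 3 := by
  choose! U' hU' hU'_le using fun t (ht : t ∈ I) =>
    exists_hasDerivWithinAt_dirichletIntegral_le hI hI_int hlr hu (hv.of_le one_le_two) hequ
      (fun t ht => ⟨(hbc t ht).1, (hbc t ht).2.1⟩) (fun t ht => (hbc t ht).2.2.1) ht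
  choose! V' hV' hV'_le using fun t (ht : t ∈ I) =>
    exists_hasDerivWithinAt_dirichletIntegral_le hI hI_int hlr hv (hu.of_le one_le_two)
      heqv (fun t ht => (hbc t ht).2.2) (fun t ht => (hbc t ht).1) ht
  refine ⟨fun t => 1 / 2 * (U' t + V' t), fun t ht => ?_, fun t ht => ?_⟩
  · exact (((hU' t ht).add (hV' t ht)).const_mul (1 / 2)).congr hJ (hJ t ht)
  · calc 1 / 2 * (U' t + V' t) ≤ _ := by gcongr; exacts [hU'_le t ht, hV'_le t ht]
      _ ≤ _ := energy_rate_le a b (sub_pos.2 hlr) (dirichletIntegral_nonneg hlr.le u t)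
        (dirichletIntegral_nonneg hlr.le v t) (hJ t ht)

end Burgers

/-- For smooth solutions `u, v` of the coupled Burgers' equations on `[0,∞) × [0,1]`
with zero Dirichlet boundary conditions, the energy
`J t = ½(‖∂ₓu(t)‖² + ‖∂ₓv(t)‖²)` satisfies
`J'(t) ≤ -J + 40J² + 36000(|a|+|b|)⁴ J³` for all `t ≥ 0`. -/
theorem coupled_burgers_energy_inequality (a b : ℝ) (u v : ℝ × ℝ → ℝ)
    (hu : ContDiffOn ℝ (⊤ : ℕ∞) u (Set.Ici (0:ℝ) ×ˢ Set.Icc (0:ℝ) 1))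
    (hv : ContDiffOn ℝ (⊤ : ℕ∞) v (Set.Ici (0:ℝ) ×ˢ Set.Icc (0:ℝ) 1))
    (hequ : ∀ t ≥ (0:ℝ), ∀ x ∈ Set.Icc (0:ℝ) 1,
      deriv (fun s => u (s, x)) t =
        deriv (deriv (fun y => u (t, y))) x - u (t, x) * deriv (fun y => u (t, y)) x
          - a * deriv (fun y => u (t, y) * v (t, y)) x)
    (heqv : ∀ t ≥ (0:ℝ), ∀ x ∈ Set.Icc (0:ℝ) 1,
      deriv (fun s => v (s, x)) t =
        deriv (deriv (fun y => v (t, y))) x - v (t, x) * deriv (fun y => v (t, y)) x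
          - b * deriv (fun y => u (t, y) * v (t, y)) x)
    (hbc : ∀ t ≥ (0:ℝ), u (t, 0) = 0 ∧ u (t, 1) = 0 ∧ v (t, 0) = 0 ∧ v (t, 1) = 0)
    (J : ℝ → ℝ)
    (hJ : ∀ t, J t = (1/2) * ((∫ x in (0:ℝ)..1, (deriv (fun y => u (t, y)) x) ^ 2)
        + ∫ x in (0:ℝ)..1, (deriv (fun y => v (t, y)) x) ^ 2)) :
    ∃ J' : ℝ → ℝ, (∀ t ≥ (0:ℝ), HasDerivWithinAt J (J' t) (Set.Ici (0:ℝ)) t) ∧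
      ∀ t ≥ (0:ℝ), J' t ≤ -J t + 40 * (J t) ^ 2 + 36000 * (|a| + |b|) ^ 4 * (J t) ^ 3 := by
  have htwo : (2 : WithTop ℕ∞) ≤ (⊤ : ℕ∞) := WithTop.coe_le_coe.2 (le_top : (2 : ℕ∞) ≤ ⊤)
  obtain ⟨J', hJ', hJ'_le⟩ := coupled_burgers_energy_inequality_general (convex_Ici 0)
    (by simp) zero_lt_one (hu.of_le htwo) (hv.of_le htwo)
    (fun t ht x hx => hequ t (interior_subset ht) x (Ioo_subset_Icc_self hx))
    (fun t ht x hx => by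
      simpa only [mul_comm] using heqv t (interior_subset ht) x (Ioo_subset_Icc_self hx))
    hbc fun t _ => hJ t
  refine ⟨J', hJ', fun t ht => (hJ'_le t ht).trans ?_⟩
  have hJ_nonneg : 0 ≤ J t := by
    rw [hJ]
    exact mul_nonneg (by norm_num) (add_nonneg (dirichletIntegral_nonneg zero_le_one u t)
      (dirichletIntegral_nonneg zero_le_one v t))
  norm_num only [sub_zero, one_pow, div_one, mul_one]
  gcongr <;> norm_num
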